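/- Let A ∈ ℝ^{N×N}, B ∈ ℝ^{N×m}, C ∈ ℝ^{p×N} with all eigenvalues of A having negative real part, and suppose there is a diagonal Σ = diag(σ₁, …, σ_N), σ₁ ≥ … ≥ σ_N > 0, with AΣ + ΣAᵀ + BBᵀ = 0 and AᵀΣ + ΣA + CᵀC = 0. Partition A = [[A₁₁, A₁₂], [A₂₁, A₂₂]] conformally with Σ = diag(Σ₁, Σ₂), Σ₁ of size r. Then every eigenvalue of the truncated matrix A₁₁ has nonpositive real part; and if moreover σ_r > σ_{r+1}, then every eigenvalue of A₁₁ has strictly negative real part, i.e., balanced truncation preserves asymptotic stability. -/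

import Mathlib

open Matrix

noncomputable section

/-- Complexification of a real matrix. -/
def toC {a b : Type*} (M : Matrix a b ℝ) : Matrix a b ℂ :=
  M.map Complex.ofReal

/-- Energy identity for a Lyapunov equation, tested against a vector supported on `S` that
satisfies the eigenvector equation of `Mᴴ` on `S`. -/
theorem lyapunov_energy_identity {n k : Type*} [Fintype n] [DecidableEq n] [Fintype k]
    {M : Matrix n n ℂ} {K : Matrix n k ℂ} {σ : n → ℝ}
    (hM : M * diagonal (fun i => (σ i : ℂ)) + diagonal (fun i => (σ i : ℂ)) * Mᴴ + K * Kᴴ = 0)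
    {S : n → Prop} {μ : ℂ} {v : n → ℂ} (hv : ∀ i, ¬ S i → v i = 0)
    (hμ : ∀ i, S i → (Mᴴ *ᵥ v) i = μ * v i) :
    2 * μ.re * ∑ i, σ i * Complex.normSq (v i) + ∑ j, Complex.normSq ((Kᴴ *ᵥ v) j) = 0 := by
  set D : Matrix n n ℂ := diagonal (fun i => (σ i : ℂ)) with hD
  have hDH : Dᴴ = D := by
    rw [hD, diagonal_conjTranspose]
    congr 1
    ext i
    simp
  have hright : star v ⬝ᵥ ((D * Mᴴ) *ᵥ v) =
      μ * ((∑ i, σ i * Complex.normSq (v i) : ℝ) : ℂ) := by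
    rw [← mulVec_mulVec, dotProduct, Complex.ofReal_sum, Finset.mul_sum]
    refine Finset.sum_congr rfl fun i _ => ?_
    rw [hD, mulVec_diagonal]
    by_cases hi : S i
    · rw [hμ i hi, Complex.ofReal_mul, Complex.normSq_eq_conj_mul_self]
      simp only [Pi.star_apply, RCLike.star_def]
      ring
    · simp [hv i hi]
  have hleft : star v ⬝ᵥ ((M * D) *ᵥ v) =
      star μ * ((∑ i, σ i * Complex.normSq (v i) : ℝ) : ℂ) := by
    have h := congrArg star hright
    rw [← star_dotProduct_star, star_star, star_mulVec, conjTranspose_mul,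
      conjTranspose_conjTranspose, hDH, ← dotProduct_mulVec] at h
    rw [h, star_mul']
    simp
  have hK : star v ⬝ᵥ ((K * Kᴴ) *ᵥ v) =
      ((∑ j, Complex.normSq ((Kᴴ *ᵥ v) j) : ℝ) : ℂ) := by
    rw [← mulVec_mulVec, dotProduct_mulVec, ← conjTranspose_conjTranspose K, ← star_mulVec,
      conjTranspose_conjTranspose, dotProduct, Complex.ofReal_sum]
    refine Finset.sum_congr rfl fun j _ => ?_
    rw [Complex.normSq_eq_conj_mul_self]
    simp
  have h0 := congrArg (fun X => (star v ⬝ᵥ (X *ᵥ v)).re) hM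
  simp only [add_mulVec, dotProduct_add, hright, hleft, hK, zero_mulVec, dotProduct_zero,
    Complex.add_re, Complex.re_mul_ofReal, Complex.ofReal_re, Complex.zero_re] at h0
  simp only [RCLike.star_def, Complex.conj_re] at h0
  linarith

/-- A nonzero vector supported on `S` satisfying the eigenvector equation on `S` has an
eigenvalue of nonpositive real part. -/
theorem re_nonpos_of_lyapunov {n k : Type*} [Fintype n] [DecidableEq n] [Fintype k]
    {M : Matrix n n ℂ} {K : Matrix n k ℂ} {σ : n → ℝ} (hσ : ∀ i, 0 < σ i)
    (hM : M * diagonal (fun i => (σ i : ℂ)) + diagonal (fun i => (σ i : ℂ)) * Mᴴ + K * Kᴴ = 0)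
    {S : n → Prop} {μ : ℂ} {v : n → ℂ} (hv0 : v ≠ 0) (hv : ∀ i, ¬ S i → v i = 0)
    (hμ : ∀ i, S i → (Mᴴ *ᵥ v) i = μ * v i) : μ.re ≤ 0 := by
  have h := lyapunov_energy_identity hM hv hμ
  have hpos : 0 < ∑ i, σ i * Complex.normSq (v i) := by
    obtain ⟨k, hk⟩ := Function.ne_iff.mp hv0
    exact Finset.sum_pos' (fun i _ => mul_nonneg (hσ i).le (Complex.normSq_nonneg _))
      ⟨k, Finset.mem_univ _, mul_pos (hσ k) (Complex.normSq_pos.mpr hk)⟩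
  have hnn : 0 ≤ ∑ j, Complex.normSq ((Kᴴ *ᵥ v) j) :=
    Finset.sum_nonneg fun j _ => Complex.normSq_nonneg _
  by_contra! hlt
  have := mul_pos hlt hpos
  linarith

/-- On the imaginary axis the inhomogeneous term of the Lyapunov equation annihilates the
vector, so that the equation becomes an intertwining relation. -/
theorem mulVec_diagonal_of_lyapunov {n k : Type*} [Fintype n] [DecidableEq n] [Fintype k]
    {M : Matrix n n ℂ} {K : Matrix n k ℂ} {σ : n → ℝ}
    (hM : M * diagonal (fun i => (σ i : ℂ)) + diagonal (fun i => (σ i : ℂ)) * Mᴴ + K * Kᴴ = 0)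
    {S : n → Prop} {μ : ℂ} (hre : μ.re = 0) {v : n → ℂ} (hv : ∀ i, ¬ S i → v i = 0)
    (hμ : ∀ i, S i → (Mᴴ *ᵥ v) i = μ * v i) (i : n) :
    (M *ᵥ fun j => σ j * v j) i = -(σ i * (Mᴴ *ᵥ v) i) := by
  have h := lyapunov_energy_identity hM hv hμ
  rw [hre, mul_zero, zero_mul, zero_add,
    Finset.sum_eq_zero_iff_of_nonneg fun j _ => Complex.normSq_nonneg _] at h
  have hK : Kᴴ *ᵥ v = 0 := by
    ext j
    exact Complex.normSq_eq_zero.mp (h j (Finset.mem_univ _))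
  have h0 := congrFun (congrArg (fun X => X *ᵥ v) hM) i
  have hD : diagonal (fun i => (σ i : ℂ)) *ᵥ v = fun j => σ j * v j := by
    ext j
    rw [mulVec_diagonal]
  simp only [add_mulVec, ← mulVec_mulVec, hK, mulVec_zero, add_zero, zero_mulVec, Pi.add_apply,
    Pi.zero_apply, hD] at h0
  rw [mulVec_diagonal] at h0
  exact eq_neg_of_add_eq_zero_left h0

/-- For a balanced realization whose Hankel singular values on `S` differ from those off `S`,
every imaginary eigenvalue of the truncation to `S` is an eigenvalue of the full matrix. -/
theorem exists_eigenvector_of_balanced {n k l : Type*} [Fintype n] [DecidableEq n] [Fintype k]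
    [Fintype l] {A : Matrix n n ℂ} {B : Matrix n k ℂ} {C : Matrix l n ℂ} {σ : n → ℝ}
    (hσ : ∀ i, 0 < σ i)
    (hP : A * diagonal (fun i => (σ i : ℂ)) + diagonal (fun i => (σ i : ℂ)) * Aᴴ + B * Bᴴ = 0)
    (hQ : Aᴴ * diagonal (fun i => (σ i : ℂ)) + diagonal (fun i => (σ i : ℂ)) * A + Cᴴ * C = 0)
    {S : n → Prop} (hS : ∀ i j, S i → ¬ S j → σ j ≠ σ i) {μ : ℂ} (hre : μ.re = 0)
    {v : n → ℂ} (hv0 : v ≠ 0) (hv : ∀ i, ¬ S i → v i = 0)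
    (hμ : ∀ i, S i → (A *ᵥ v) i = μ * v i) : ∃ w : n → ℂ, w ≠ 0 ∧ A *ᵥ w = μ • w := by
  have hQ' : Aᴴ * diagonal (fun i => (σ i : ℂ)) + diagonal (fun i => (σ i : ℂ)) * Aᴴᴴ
      + Cᴴ * Cᴴᴴ = 0 := by simpa only [conjTranspose_conjTranspose] using hQ
  have hre' : (-μ).re = 0 := by simp [hre]
  let V : Submodule ℂ (n → ℂ) :=
    { carrier := {u | (∀ i, ¬ S i → u i = 0) ∧ ∀ i, S i → (A *ᵥ u) i = μ * u i}
      zero_mem' := by simp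
      add_mem' := by
        rintro a b ⟨ha, ha'⟩ ⟨hb, hb'⟩
        refine ⟨fun i hi => by simp [ha i hi, hb i hi], fun i hi => ?_⟩
        rw [mulVec_add, Pi.add_apply, Pi.add_apply, ha' i hi, hb' i hi, mul_add]
      smul_mem' := by
        rintro c a ⟨ha, ha'⟩
        refine ⟨fun i hi => by simp [ha i hi], fun i hi => ?_⟩
        rw [mulVec_smul, Pi.smul_apply, Pi.smul_apply, ha' i hi, smul_eq_mul, smul_eq_mul,
          mul_left_comm] }
  have hobs : ∀ u ∈ V, ∀ i, (Aᴴ *ᵥ fun j => σ j * u j) i = -(σ i * (A *ᵥ u) i) := by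
    rintro u ⟨hu, hu'⟩ i
    have h := mulVec_diagonal_of_lyapunov hQ' hre hu
      (by simpa only [conjTranspose_conjTranspose] using hu') i
    simpa only [conjTranspose_conjTranspose] using h
  have hctr : ∀ u ∈ V, ∀ i, (A *ᵥ fun j => σ j * (σ j * u j)) i =
      -(σ i * (Aᴴ *ᵥ fun j => σ j * u j) i) := by
    rintro u hu i
    refine mulVec_diagonal_of_lyapunov hP hre' (S := S) (fun j hj => ?_) (fun j hj => ?_) i
    · rw [hu.1 j hj, mul_zero]
    · rw [hobs u hu j, hu.2 j hj]
      ring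
  have hmap : ∀ u ∈ V, toLin' (diagonal fun i => (σ i : ℂ) * σ i) u ∈ V := by
    intro u hu
    have hD : toLin' (diagonal fun i => (σ i : ℂ) * σ i) u = fun j => σ j * (σ j * u j) := by
      ext j
      rw [toLin'_apply, mulVec_diagonal, mul_assoc]
    rw [hD]
    refine ⟨fun i hi => ?_, fun i hi => ?_⟩
    · simp [hu.1 i hi]
    · rw [hctr u hu i, hobs u hu i, hu.2 i hi]
      ring
  have : Nontrivial V := ⟨⟨⟨v, hv, hμ⟩, 0, fun h => hv0 (congrArg Subtype.val h)⟩⟩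
  obtain ⟨c, hc⟩ := Module.End.exists_eigenvalue
    ((toLin' (diagonal fun i => (σ i : ℂ) * σ i)).restrict hmap)
  obtain ⟨⟨w, hwV⟩, hw⟩ := hc.exists_hasEigenvector
  have hw0 : w ≠ 0 := fun h => hw.2 (Subtype.ext h)
  have hwc : ∀ i, (σ i : ℂ) * σ i * w i = c * w i := fun i => by
    have h := congrFun (congrArg Subtype.val hw.apply_eq_smul) i
    rwa [LinearMap.coe_restrict_apply, toLin'_apply, mulVec_diagonal] at h
  obtain ⟨k, hk⟩ := Function.ne_iff.mp hw0
  have hkS : S k := by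
    by_contra h
    exact hk (hwV.1 k h)
  have hσw : (fun j => (σ j : ℂ) * w j) = (σ k : ℂ) • w := by
    ext j
    rw [Pi.smul_apply, smul_eq_mul]
    by_cases hj : w j = 0
    · simp [hj]
    · have h : (σ j : ℂ) * σ j = σ k * σ k :=
        (mul_right_cancel₀ hj (hwc j)).trans (mul_right_cancel₀ hk (hwc k)).symm
      have h' : σ j * σ j = σ k * σ k := by exact_mod_cast h
      rw [(mul_self_inj (hσ j).le (hσ k).le).mp h']
  have hσσw : (fun j => (σ j : ℂ) * (σ j * w j)) = ((σ k : ℂ) * σ k) • w := by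
    rw [mul_smul, ← hσw]
    ext j
    have h := congrFun hσw j
    simp only [Pi.smul_apply, smul_eq_mul] at h ⊢
    rw [h, mul_left_comm, h]
  refine ⟨w, hw0, funext fun i => ?_⟩
  by_cases hi : S i
  · exact hwV.2 i hi
  · have h := hctr w hwV i
    rw [hobs w hwV i, hσσw, mulVec_smul, Pi.smul_apply, smul_eq_mul] at h
    have hne : (σ k : ℂ) * σ k - σ i * σ i ≠ 0 := by
      rw [sub_ne_zero]
      intro h'
      have h'' : σ k * σ k = σ i * σ i := by exact_mod_cast h'
      exact hS k i hkS hi ((mul_self_inj (hσ k).le (hσ i).le).mp h'').symm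
    have h0 : ((σ k : ℂ) * σ k - σ i * σ i) * (A *ᵥ w) i = 0 := by
      rw [sub_mul, h]
      ring
    rw [(mul_eq_zero.mp h0).resolve_left hne, Pi.smul_apply, hwV.1 i hi, smul_zero]

theorem det_sub_smul_one_eq_zero_iff {n : Type*} [Fintype n] [DecidableEq n]
    (M : Matrix n n ℂ) (μ : ℂ) :
    (M - μ • (1 : Matrix n n ℂ)).det = 0 ↔ ∃ v : n → ℂ, v ≠ 0 ∧ M *ᵥ v = μ • v := by
  rw [← exists_mulVec_eq_zero_iff]
  simp only [sub_mulVec, smul_mulVec, one_mulVec, sub_eq_zero]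

theorem conjTranspose_toC {a b : Type*} (M : Matrix a b ℝ) : (toC M)ᴴ = toC Mᵀ := by
  ext i j
  simp [toC]

/-- The extension by zero of an eigenvector of a leading principal submatrix. -/
theorem exists_supported_eigenvector {N r : ℕ} (hrN : r ≤ N) (A : Matrix (Fin N) (Fin N) ℂ)
    {μ : ℂ} {v : Fin r → ℂ} (hv0 : v ≠ 0)
    (hv : A.submatrix (Fin.castLE hrN) (Fin.castLE hrN) *ᵥ v = μ • v) :
    ∃ w : Fin N → ℂ, w ≠ 0 ∧ (∀ i : Fin N, ¬ (i : ℕ) < r → w i = 0) ∧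
      ∀ i : Fin N, (i : ℕ) < r → (A *ᵥ w) i = μ * w i := by
  have hinj : Function.Injective (Fin.castLE hrN) := Fin.castLE_injective hrN
  have hw : ∀ j, Function.extend (Fin.castLE hrN) v 0 (Fin.castLE hrN j) = v j :=
    hinj.extend_apply v 0
  have hout : ∀ i : Fin N, i ∉ Set.range (Fin.castLE hrN) →
      Function.extend (Fin.castLE hrN) v 0 i = 0 := fun i hi => by
    rw [Function.extend_apply' _ _ _ hi, Pi.zero_apply]
  refine ⟨Function.extend (Fin.castLE hrN) v 0, fun h => hv0 ?_, fun i hi => hout i ?_,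
    fun i hi => ?_⟩
  · ext j
    rw [← hw j, h, Pi.zero_apply, Pi.zero_apply]
  · rintro ⟨j, rfl⟩
    exact hi j.isLt
  · obtain ⟨j, rfl⟩ : ∃ j, Fin.castLE hrN j = i := ⟨⟨i, hi⟩, rfl⟩
    rw [hw, ← smul_eq_mul, ← Pi.smul_apply, ← hv]
    refine (Fintype.sum_of_injective _ hinj _ _ (fun i hi => ?_) fun k => ?_).symm
    · rw [hout i hi, mul_zero]
    · rw [hw]
      rfl

/-- Balanced truncation preserves (asymptotic) stability: for a balanced asymptotically
stable realization `(A, B, C)` with Gramians `P = Q = Σ = diag(σ₁ ≥ … ≥ σ_N > 0)` and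
conformal partitioning with `Σ₁` of size `r`, every eigenvalue of the truncated matrix
`A₁₁` has nonpositive real part; and if moreover `σ_r > σ_{r+1}`, every eigenvalue of
`A₁₁` has strictly negative real part. -/
theorem balanced_truncation_preserves_stability {N m p : ℕ}
    (A : Matrix (Fin N) (Fin N) ℝ) (B : Matrix (Fin N) (Fin m) ℝ)
    (C : Matrix (Fin p) (Fin N) ℝ) (σ : Fin N → ℝ)
    (hA : ∀ μ : ℂ, (toC A - μ • (1 : Matrix (Fin N) (Fin N) ℂ)).det = 0 → μ.re < 0)
    (hσpos : ∀ i, 0 < σ i) (hσmono : ∀ i j : Fin N, i ≤ j → σ j ≤ σ i)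
    (hlyapP : A * Matrix.diagonal σ + Matrix.diagonal σ * Aᵀ + B * Bᵀ = 0)
    (hlyapQ : Aᵀ * Matrix.diagonal σ + Matrix.diagonal σ * A + Cᵀ * C = 0)
    (r : ℕ) (hrN : r ≤ N)
    (A₁₁ : Matrix (Fin r) (Fin r) ℝ)
    (hA₁₁ : A₁₁ = A.submatrix (Fin.castLE hrN) (Fin.castLE hrN)) :
    (∀ μ : ℂ, (toC A₁₁ - μ • (1 : Matrix (Fin r) (Fin r) ℂ)).det = 0 → μ.re ≤ 0) ∧
    (∀ (hr1 : 1 ≤ r) (hrN' : r < N), σ ⟨r, hrN'⟩ < σ ⟨r - 1, by omega⟩ →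
      ∀ μ : ℂ, (toC A₁₁ - μ • (1 : Matrix (Fin r) (Fin r) ℂ)).det = 0 → μ.re < 0) := by
  have hdiag : toC (diagonal σ) = diagonal fun i => (σ i : ℂ) :=
    diagonal_map Complex.ofReal_zero
  have hmul : ∀ {a b c : Type} [Fintype b] (X : Matrix a b ℝ) (Y : Matrix b c ℝ),
      toC (X * Y) = toC X * toC Y := fun X Y => Matrix.map_mul (f := Complex.ofRealHom)
  have hadd : ∀ {a b : Type} (X Y : Matrix a b ℝ), toC (X + Y) = toC X + toC Y := fun X Y =>
    Matrix.map_add _ Complex.ofReal_add X Y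
  have hzero : toC (0 : Matrix (Fin N) (Fin N) ℝ) = 0 := Matrix.map_zero _ Complex.ofReal_zero
  have hP := congrArg toC hlyapP
  have hQ := congrArg toC hlyapQ
  simp only [hadd, hmul, hzero, hdiag, ← conjTranspose_toC] at hP hQ
  have hsupp : ∀ μ : ℂ, (toC A₁₁ - μ • (1 : Matrix (Fin r) (Fin r) ℂ)).det = 0 →
      ∃ w : Fin N → ℂ, w ≠ 0 ∧ (∀ i : Fin N, ¬ (i : ℕ) < r → w i = 0) ∧
        ∀ i : Fin N, (i : ℕ) < r → (toC A *ᵥ w) i = μ * w i := by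
    intro μ hdet
    obtain ⟨v, hv0, hv⟩ := (det_sub_smul_one_eq_zero_iff _ μ).mp hdet
    rw [hA₁₁] at hv
    exact exists_supported_eigenvector hrN (toC A) hv0 hv
  have hnonpos : ∀ μ : ℂ, (toC A₁₁ - μ • (1 : Matrix (Fin r) (Fin r) ℂ)).det = 0 →
      μ.re ≤ 0 := by
    intro μ hdet
    obtain ⟨w, hw0, hw, hμ⟩ := hsupp μ hdet
    refine re_nonpos_of_lyapunov (M := (toC A)ᴴ) (K := (toC C)ᴴ) hσpos ?_ hw0 hw ?_
    · simpa only [conjTranspose_conjTranspose] using hQ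
    · simpa only [conjTranspose_conjTranspose] using hμ
  refine ⟨hnonpos, fun hr1 hrN' hgap μ hdet => (hnonpos μ hdet).lt_of_ne fun hre => ?_⟩
  obtain ⟨w, hw0, hw, hμ⟩ := hsupp μ hdet
  have hsep : ∀ i j : Fin N, (i : ℕ) < r → ¬ (j : ℕ) < r → σ j ≠ σ i := fun i j hi hj =>
    (((hσmono ⟨r, hrN'⟩ j (not_lt.mp hj)).trans_lt hgap).trans_le
      (hσmono i ⟨r - 1, by omega⟩ (Nat.le_sub_one_of_lt hi))).ne
  have hfull := exists_eigenvector_of_balanced hσpos hP hQ hsep hre hw0 hw hμ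
  exact (hA μ ((det_sub_smul_one_eq_zero_iff _ μ).mpr hfull)).ne hre
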